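/- Let (X,μ) and (Y,ν) be standard Borel spaces equipped with σ-finite Borel measures, and let E ⊆ X × Y be a set of finite width. Then every compact operator T : L²(X,μ) → L²(Y,ν) supported on E belongs to the operator-norm closed linear span of the rank-one operators supported on E, where a rank-one operator is one of the form f ↦ (∫_X f·u dμ)·v with u ∈ L²(X,μ), v ∈ L²(Y,ν). -/

import Mathlib

/-!
The argument reduces compact operators on a set `E` of finite width to blocks `P(β) T P(α)` on
rectangles `α × β ⊆ E`. Such a block is compact, and cutting a finite-rank approximation of `T` down
to the rectangle approximates the block by sums of rank-one operators that are automatically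
supported on `E`. So it is enough to show that `T` is a norm limit of linear combinations of its
blocks inside `E` (`mem_closure_cutSpan_of_finiteWidth`).

Since a block of a block is a block on the intersected rectangle, and blocks of `T` are again
compact and supported on `E`, the inequalities defining `E` can be treated one at a time
(`mem_closure_cutSpan_inter`). For a single inequality `f x ≤ g y`, take a finite set `S ⊆ ℝ` and
split the line into the points of `S` and the gaps between them, ordered from left to right. The
block of `T` over a pair of cells `(k, l)` vanishes if `k > l`; if `k < l`, or if `k = l` is a point of
`S`, its rectangle lies inside `{f ≤ g}`. What is left is the sum of the diagonal blocks over the gaps.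
This sum is an orthogonal direct sum, so its norm is the largest norm of its blocks
(`norm_sum_cut_diag_le`), and compactness makes all of these small for a suitable `S`
(`exists_finset_norm_comp_mulInd_le`): up to a small error `T` is `∑ j, ⟪w j, ·⟫ • e j`, and the
finite measures `f_*(‖w j‖² μ)` give small mass to every gap once `S` is chosen to contain their large
atoms and to be fine enough (`exists_finset_gaps_small`).
-/

open MeasureTheory

/-- A subset of `X × Y` is marginally null if it is contained in
`(X₀ × Y) ∪ (X × Y₀)` with `μ X₀ = 0` and `ν Y₀ = 0`. -/
def MarginallyNull {X Y : Type*} [MeasurableSpace X] [MeasurableSpace Y]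
    (μ : Measure X) (ν : Measure Y) (M : Set (X × Y)) : Prop :=
  ∃ (X₀ : Set X) (Y₀ : Set Y), MeasurableSet X₀ ∧ MeasurableSet Y₀ ∧
    μ X₀ = 0 ∧ ν Y₀ = 0 ∧ M ⊆ (X₀ ×ˢ (Set.univ : Set Y)) ∪ ((Set.univ : Set X) ×ˢ Y₀)

/-- A bounded operator `T : L²(X,μ) → L²(Y,ν)` is supported on `E ⊆ X × Y` if
`P(β) ∘ T ∘ P(α) = 0` whenever `(α × β) ∩ E` is marginally null; equivalently, whenever
`(α × β) ∩ E` is marginally null, `T f` vanishes a.e. on `β` for every `f` vanishing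
a.e. off `α`. -/
def SupportedOn {X Y : Type*} [MeasurableSpace X] [MeasurableSpace Y]
    (μ : Measure X) (ν : Measure Y) (T : Lp ℂ 2 μ →L[ℂ] Lp ℂ 2 ν)
    (E : Set (X × Y)) : Prop :=
  ∀ (α : Set X) (β : Set Y), MeasurableSet α → MeasurableSet β →
    MarginallyNull μ ν ((α ×ˢ β) ∩ E) →
    ∀ f : Lp ℂ 2 μ, (∀ᵐ x ∂μ, x ∉ α → f x = 0) → ∀ᵐ y ∂ν, y ∈ β → T f y = 0

/-- `E ⊆ X × Y` is a set of finite width if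
`E = {(x,y) : f i x ≤ g i y, i = 1, …, n}` for finitely many measurable
real-valued functions `f i`, `g i`. -/
def FiniteWidth {X Y : Type*} [MeasurableSpace X] [MeasurableSpace Y]
    (E : Set (X × Y)) : Prop :=
  ∃ (n : ℕ) (f : Fin n → X → ℝ) (g : Fin n → Y → ℝ),
    (∀ i, Measurable (f i)) ∧ (∀ i, Measurable (g i)) ∧
    E = {p : X × Y | ∀ i, f i p.1 ≤ g i p.2}

/-! ### Hilbert space preliminaries -/

section Hilbert
open InnerProductSpace

/-- A compact operator `T` between Hilbert spaces is a norm limit of finite-rank operators: `P T`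
is close to `T` when `P` is the orthogonal projection onto the span of a finite net of the image of
the unit ball. -/
theorem exists_finiteRank_approx {H K : Type*} [NormedAddCommGroup H] [InnerProductSpace ℂ H]
    [CompleteSpace H] [NormedAddCommGroup K] [InnerProductSpace ℂ K] [CompleteSpace K]
    (T : H →L[ℂ] K) (hT : IsCompactOperator ⇑T) {ε : ℝ} (hε : 0 < ε) :
    ∃ (n : ℕ) (e : Fin n → K) (w : Fin n → H), ‖T - ∑ j, rankOne ℂ (e j) (w j)‖ ≤ ε := by
  have hK : IsCompact (closure (⇑T '' Metric.closedBall 0 1)) :=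
    IsCompactOperator.isCompact_closure_image_closedBall (f := (T : H →ₗ[ℂ] K)) hT 1
  have hTB : TotallyBounded (⇑T '' Metric.closedBall 0 1) :=
    hK.totallyBounded.subset subset_closure
  obtain ⟨t, htf, ht⟩ := Metric.totallyBounded_iff.1 hTB ε hε
  let V : Submodule ℂ K := Submodule.span ℂ t
  have : FiniteDimensional ℂ V := FiniteDimensional.span_of_finite ℂ htf
  let b := stdOrthonormalBasis ℂ V
  refine ⟨_, fun j => (b j : K), fun j => ContinuousLinearMap.adjoint T (b j : K), ?_⟩
  have hsum : ∑ j, rankOne ℂ (b j : K) (ContinuousLinearMap.adjoint T (b j : K))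
      = V.starProjection ∘L T := by
    rw [b.starProjection_eq_sum_rankOne]
    ext x
    simp [ContinuousLinearMap.adjoint_inner_left]
  rw [hsum]
  refine ContinuousLinearMap.opNorm_le_of_unit_norm hε.le fun x hx => ?_
  have hx' : T x ∈ ⋃ y ∈ t, Metric.ball y ε := ht ⟨x, by simp [hx], rfl⟩
  simp only [Set.mem_iUnion, Metric.mem_ball, exists_prop] at hx'
  obtain ⟨y, hy, hxy⟩ := hx'
  have hmin : ‖T x - V.starProjection (T x)‖ ≤ ‖T x - y‖ := by
    rw [Submodule.starProjection_minimal]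
    exact ciInf_le ⟨0, by rintro _ ⟨z, rfl⟩; exact norm_nonneg _⟩
      (⟨y, Submodule.subset_span hy⟩ : V)
  rw [dist_eq_norm] at hxy
  exact hmin.trans hxy.le

theorem norm_sq_sum_of_orthogonal {H ι : Type*} [NormedAddCommGroup H] [InnerProductSpace ℂ H]
    (s : Finset ι) (w : ι → H) (h : ∀ i j, i ≠ j → inner ℂ (w i) (w j) = 0) :
    ‖∑ i ∈ s, w i‖ ^ 2 = ∑ i ∈ s, ‖w i‖ ^ 2 := by
  classical
  induction s using Finset.induction_on with
  | empty => simp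
  | insert a s ha ih =>
    rw [Finset.sum_insert ha, Finset.sum_insert ha, ← ih]
    have h0 : inner ℂ (w a) (∑ i ∈ s, w i) = 0 := by
      rw [inner_sum]
      exact Finset.sum_eq_zero fun i hi => h a i fun hai => ha (hai ▸ hi)
    have := norm_add_sq_eq_norm_sq_add_norm_sq_of_inner_eq_zero (w a) (∑ i ∈ s, w i) h0
    simpa [sq] using this

end Hilbert

/-! ### Finite partitions of the line -/

/-- Finitely many points cut the line into gaps of mass at most `δ` for a given finite measure.
Atoms are harmless because they can be chosen among the cutting points. -/
theorem exists_finset_gaps_small (a : Measure ℝ) [IsFiniteMeasure a] {δ : ENNReal} (hδ : 0 < δ) :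
    ∃ S : Finset ℝ, ∀ J : Set ℝ, J.OrdConnected → (∀ s ∈ S, s ∉ J) → a J ≤ δ := by
  classical
  obtain ⟨K, -, hKc, hK⟩ := MeasurableSet.univ.exists_isCompact_sdiff_lt
    (measure_ne_top a Set.univ) hδ.ne'
  obtain ⟨M, hM⟩ := hKc.isBounded.subset_closedBall (0 : ℝ)
  have hIcc : IsCompact (Set.Icc (-M) M) := isCompact_Icc
  have key : ∃ S : Finset ℝ, ∀ J : Set ℝ, J.OrdConnected → (∀ s ∈ S, s ∉ J) →
      (J ∩ Set.Icc (-M) M).Nonempty → a J ≤ δ := by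
    refine hIcc.induction_on
      (p := fun s => ∃ S : Finset ℝ, ∀ J : Set ℝ, J.OrdConnected → (∀ s ∈ S, s ∉ J) →
        (J ∩ s).Nonempty → a J ≤ δ) ?_ ?_ ?_ ?_
    · exact ⟨∅, by simp⟩
    · rintro s t hst ⟨S, hS⟩
      exact ⟨S, fun J hJ hJS hne => hS J hJ hJS (hne.mono (Set.inter_subset_inter_right _ hst))⟩
    · rintro s t ⟨S, hS⟩ ⟨S', hS'⟩
      refine ⟨S ∪ S', fun J hJ hJS hne => ?_⟩
      rw [Set.inter_union_distrib_left, Set.union_nonempty] at hne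
      rcases hne with h | h
      · exact hS J hJ (fun s hs => hJS s (Finset.mem_union_left _ hs)) h
      · exact hS' J hJ (fun s hs => hJS s (Finset.mem_union_right _ hs)) h
    · intro t _
      -- Removing the possible atom at `t`, a small interval around `t` has small mass.
      have h0 : (a.restrict {t}ᶜ) {t} < δ := by
        rw [Measure.restrict_apply (measurableSet_singleton t)]; simpa using hδ
      obtain ⟨U, htU, hUo, hU⟩ := Set.exists_isOpen_lt_of_lt _ _ h0
      obtain ⟨r, hr, hrU⟩ := Metric.isOpen_iff.1 hUo t (htU rfl)
      rw [Real.ball_eq_Ioo] at hrU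
      refine ⟨Set.Ioo (t - r) (t + r), mem_nhdsWithin_of_mem_nhds
        (Ioo_mem_nhds (by linarith) (by linarith)), {t - r, t, t + r}, ?_⟩
      rintro J hJ hJS ⟨p, hpJ, hp1, hp2⟩
      have h1 : t - r ∉ J := hJS _ (by simp)
      have h2 : t ∉ J := hJS _ (by simp)
      have h3 : t + r ∉ J := hJS _ (by simp)
      have hsub : J ⊆ U ∩ {t}ᶜ := by
        intro q hq
        refine ⟨hrU ⟨?_, ?_⟩, fun h => h2 (h ▸ hq)⟩
        · by_contra! h
          exact h1 (hJ.out hq hpJ ⟨h, hp1.le⟩)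
        · by_contra! h
          exact h3 (hJ.out hpJ hq ⟨hp2.le, h⟩)
      calc a J ≤ a (U ∩ {t}ᶜ) := measure_mono hsub
        _ = (a.restrict {t}ᶜ) U := (Measure.restrict_apply hUo.measurableSet).symm
        _ ≤ δ := hU.le
  obtain ⟨S, hS⟩ := key
  refine ⟨S ∪ {-M, M}, fun J hJ hJS => ?_⟩
  by_cases hne : (J ∩ Set.Icc (-M) M).Nonempty
  · exact hS J hJ (fun s hs => hJS s (Finset.mem_union_left _ hs)) hne
  · refine (measure_mono fun q hq => ?_).trans hK.le
    refine ⟨trivial, fun hqK => hne ⟨q, hq, ?_⟩⟩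
    have := hM hqK
    rw [Real.closedBall_eq_Icc] at this
    simpa using this

/-- The index of `t` in the partition of `ℝ` into the points of `S` and the gaps between them,
numbered from left to right: the gaps carry the even numbers `0, …, 2 * S.card`, the points of `S`
the odd ones. -/
noncomputable def cellIndex (S : Finset ℝ) (t : ℝ) : ℕ :=
  (S.filter (· < t)).card + (S.filter (· ≤ t)).card

theorem cellIndex_mono (S : Finset ℝ) : Monotone (cellIndex S) := fun t t' h =>
  add_le_add
    (Finset.card_le_card fun s hs => by
      simp only [Finset.mem_filter] at hs ⊢; exact ⟨hs.1, hs.2.trans_le h⟩)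
    (Finset.card_le_card fun s hs => by
      simp only [Finset.mem_filter] at hs ⊢; exact ⟨hs.1, hs.2.trans h⟩)

theorem cellIndex_lt (S : Finset ℝ) (t : ℝ) : cellIndex S t < 2 * S.card + 1 := by
  have h1 := Finset.card_filter_le S (· < t)
  have h2 := Finset.card_filter_le S (· ≤ t)
  unfold cellIndex; omega

/-- The points of `S` are alone in their cells. -/
theorem cellIndex_lt_of_lt {S : Finset ℝ} {t t' : ℝ} (h : t < t') (hS : t ∈ S ∨ t' ∈ S) :
    cellIndex S t < cellIndex S t' := by
  rcases hS with hS | hS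
  · refine add_lt_add_of_lt_of_le (Finset.card_lt_card ?_) (Finset.card_le_card fun s hs => ?_)
    · refine Finset.ssubset_iff_of_subset (fun s hs => ?_) |>.2 ⟨t, by simp [hS, h], by simp⟩
      simp only [Finset.mem_filter] at hs ⊢; exact ⟨hs.1, hs.2.trans h⟩
    · simp only [Finset.mem_filter] at hs ⊢; exact ⟨hs.1, hs.2.trans h.le⟩
  · refine add_lt_add_of_le_of_lt (Finset.card_le_card fun s hs => ?_) (Finset.card_lt_card ?_)
    · simp only [Finset.mem_filter] at hs ⊢; exact ⟨hs.1, hs.2.trans h⟩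
    · refine Finset.ssubset_iff_of_subset (fun s hs => ?_) |>.2 ⟨t', by simp [hS], by simp [h]⟩
      simp only [Finset.mem_filter] at hs ⊢; exact ⟨hs.1, hs.2.trans h.le⟩

/-! ### Multiplication by indicators -/

section Ind
variable {X : Type*} [MeasurableSpace X] {μ : Measure X}

theorem memLp_indicator_coe {s : Set X} (hs : MeasurableSet s) (f : Lp ℂ 2 μ) :
    MemLp (s.indicator (f : X → ℂ)) 2 μ :=
  (Lp.memLp f).indicator hs

theorem norm_toLp_indicator_le {s : Set X} (hs : MeasurableSet s) (f : Lp ℂ 2 μ) :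
    ‖(memLp_indicator_coe hs f).toLp‖ ≤ ‖f‖ := by
  refine Lp.norm_le_norm_of_ae_le ?_
  filter_upwards [MemLp.coeFn_toLp (memLp_indicator_coe hs f)] with x hx
  rw [hx]
  by_cases hxs : x ∈ s <;> simp [hxs]

/-- Multiplication by the indicator of `s`, as a linear map on `L²`; `mulInd` is its bounded
version. -/
noncomputable def mulIndLin {s : Set X} (hs : MeasurableSet s) : Lp ℂ 2 μ →ₗ[ℂ] Lp ℂ 2 μ where
  toFun f := (memLp_indicator_coe hs f).toLp
  map_add' f g := by
    rw [← MemLp.toLp_add, MemLp.toLp_eq_toLp_iff, ← Set.indicator_add']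
    exact (Lp.coeFn_add f g).indicator
  map_smul' c f := by
    rw [RingHom.id_apply, ← MemLp.toLp_const_smul, MemLp.toLp_eq_toLp_iff]
    filter_upwards [Lp.coeFn_smul c f] with x hx
    by_cases hxs : x ∈ s <;> simp [hxs, hx]

/-- The projection `P(s)` on `L²`: multiplication by the indicator of `s`. -/
noncomputable def mulInd {s : Set X} (hs : MeasurableSet s) : Lp ℂ 2 μ →L[ℂ] Lp ℂ 2 μ :=
  (mulIndLin hs).mkContinuous 1 fun f => by
    rw [one_mul]; exact norm_toLp_indicator_le hs f

theorem mulInd_coe {s : Set X} (hs : MeasurableSet s) (f : Lp ℂ 2 μ) :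
    ⇑(mulInd hs f) =ᵐ[μ] s.indicator f :=
  MemLp.coeFn_toLp (memLp_indicator_coe hs f)

theorem norm_mulInd_le {s : Set X} (hs : MeasurableSet s) (f : Lp ℂ 2 μ) :
    ‖mulInd hs f‖ ≤ ‖f‖ := norm_toLp_indicator_le hs f

theorem mulInd_mulInd {s t : Set X} (hs : MeasurableSet s) (ht : MeasurableSet t) (f : Lp ℂ 2 μ) :
    mulInd hs (mulInd ht f) = mulInd (hs.inter ht) f := by
  refine Lp.ext ?_
  filter_upwards [mulInd_coe hs (mulInd ht f), mulInd_coe ht f, mulInd_coe (hs.inter ht) f]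
    with x h1 h2 h3
  rw [h1, h3, ← Set.indicator_indicator]
  by_cases hx : x ∈ s <;> simp [hx, h2]

theorem mulInd_univ (f : Lp ℂ 2 μ) : mulInd MeasurableSet.univ f = f := by
  refine Lp.ext ?_
  filter_upwards [mulInd_coe MeasurableSet.univ f] with x hx
  simp [hx]

theorem inner_mulInd {s : Set X} (hs : MeasurableSet s) (f g : Lp ℂ 2 μ) :
    inner ℂ (mulInd hs f) g = inner ℂ f (mulInd hs g) := by
  rw [L2.inner_def, L2.inner_def]
  refine integral_congr_ae ?_
  filter_upwards [mulInd_coe hs f, mulInd_coe hs g] with x h1 h2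
  rw [h1, h2]
  by_cases hx : x ∈ s <;> simp [hx]

theorem inner_mulInd_of_disjoint {s t : Set X} (hs : MeasurableSet s) (ht : MeasurableSet t)
    (hst : Disjoint s t) (f g : Lp ℂ 2 μ) : inner ℂ (mulInd hs f) (mulInd ht g) = 0 := by
  rw [L2.inner_def]
  refine integral_eq_zero_of_ae ?_
  filter_upwards [mulInd_coe hs f, mulInd_coe ht g] with x h1 h2
  rw [h1, h2]
  by_cases hx : x ∈ s
  · simp [Set.disjoint_left.1 hst hx]
  · simp [hx]

theorem sum_mulInd_fiber {p : X → ℕ} (hp : Measurable p) {N : ℕ} (hN : ∀ x, p x < N)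
    (f : Lp ℂ 2 μ) :
    ∑ k ∈ Finset.range N, mulInd (hp (measurableSet_singleton k)) f = f := by
  refine Lp.ext ?_
  have h : ∀ᵐ x ∂μ, ∀ k : ℕ, mulInd (hp (measurableSet_singleton k)) f x
      = (p ⁻¹' {k}).indicator f x := ae_all_iff.2 fun k => mulInd_coe _ f
  filter_upwards [h, Lp.coeFn_finsetSum (Finset.range N)
    (fun k => mulInd (hp (measurableSet_singleton k)) f)] with x hx hsum
  rw [hsum, Finset.sum_apply, Finset.sum_congr rfl fun k _ => hx k,
    Finset.sum_eq_single (p x)]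
  · simp
  · intro k _ hk
    simp [hk.symm]
  · intro h; exact absurd (Finset.mem_range.2 (hN x)) h

/-- After cutting the line at finitely many points, every piece of `w` lying over a single gap (with
respect to `f`) has small norm. -/
theorem exists_finset_norm_mulInd_le {f : X → ℝ} (hf : Measurable f) (w : Lp ℂ 2 μ)
    {δ : ℝ} (hδ : 0 < δ) :
    ∃ S : Finset ℝ, ∀ (J : Set ℝ) (hJ : J.OrdConnected), (∀ s ∈ S, s ∉ J) →
      ‖mulInd (hf hJ.measurableSet) w‖ ≤ δ := by
  have hnorm : ∀ {s : Set X} (hs : MeasurableSet s),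
      ENNReal.ofReal (‖mulInd hs w‖ ^ 2) = (μ.withDensity fun x => ‖w x‖ₑ ^ 2) s := by
    intro s hs
    rw [withDensity_apply _ hs, ENNReal.ofReal_pow (norm_nonneg _), ofReal_norm, Lp.enorm_def]
    have h2 := eLpNorm_nnreal_pow_eq_lintegral (μ := μ) (f := mulInd hs w) (p := 2) two_ne_zero
    have h3 : ∫⁻ x, ‖mulInd hs w x‖ₑ ^ 2 ∂μ = ∫⁻ x in s, ‖w x‖ₑ ^ 2 ∂μ := by
      rw [← lintegral_indicator hs]
      refine lintegral_congr_ae ?_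
      filter_upwards [mulInd_coe hs w] with x hx
      rw [hx]
      by_cases hxs : x ∈ s <;> simp [hxs]
    rw [← h3]
    simpa using h2
  let m : Measure X := μ.withDensity fun x => ‖w x‖ₑ ^ 2
  have : IsFiniteMeasure m := ⟨by
    rw [← hnorm MeasurableSet.univ]; exact ENNReal.ofReal_lt_top⟩
  obtain ⟨S, hS⟩ := exists_finset_gaps_small (m.map f)
    (δ := ENNReal.ofReal (δ ^ 2)) (by simpa using pow_pos hδ 2)
  refine ⟨S, fun J hJ hJS => ?_⟩
  have := hS J hJ hJS
  rw [Measure.map_apply hf hJ.measurableSet, ← hnorm (hf hJ.measurableSet),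
    ENNReal.ofReal_le_ofReal_iff (by positivity)] at this
  exact le_of_sq_le_sq this hδ.le

end Ind

/-! ### Blocks of an operator on rectangles -/

section Cut
open InnerProductSpace
variable {X Y : Type*} [MeasurableSpace X] [MeasurableSpace Y] {μ : Measure X} {ν : Measure Y}

/-- The block `P(β) T P(α)` of `T` on the rectangle `α × β`. -/
noncomputable def cut {α : Set X} {β : Set Y} (hα : MeasurableSet α) (hβ : MeasurableSet β)
    (T : Lp ℂ 2 μ →L[ℂ] Lp ℂ 2 ν) : Lp ℂ 2 μ →L[ℂ] Lp ℂ 2 ν :=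
  mulInd hβ ∘L T ∘L mulInd hα

theorem cut_apply {α : Set X} {β : Set Y} (hα : MeasurableSet α) (hβ : MeasurableSet β)
    (T : Lp ℂ 2 μ →L[ℂ] Lp ℂ 2 ν) (f : Lp ℂ 2 μ) :
    cut hα hβ T f = mulInd hβ (T (mulInd hα f)) := rfl

theorem cut_cut {α α' : Set X} {β β' : Set Y} (hα : MeasurableSet α) (hβ : MeasurableSet β)
    (hα' : MeasurableSet α') (hβ' : MeasurableSet β') (T : Lp ℂ 2 μ →L[ℂ] Lp ℂ 2 ν) :
    cut hα' hβ' (cut hα hβ T) = cut (hα.inter hα') (hβ'.inter hβ) T := by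
  ext1 f
  simp only [cut_apply, mulInd_mulInd]

theorem isCompactOperator_cut {α : Set X} {β : Set Y} (hα : MeasurableSet α)
    (hβ : MeasurableSet β) {T : Lp ℂ 2 μ →L[ℂ] Lp ℂ 2 ν} (hT : IsCompactOperator ⇑T) :
    IsCompactOperator ⇑(cut hα hβ T) :=
  (hT.comp_clm (mulInd hα)).clm_comp (mulInd hβ)

theorem norm_cut_le {α : Set X} {β : Set Y} (hα : MeasurableSet α)
    (hβ : MeasurableSet β) (T : Lp ℂ 2 μ →L[ℂ] Lp ℂ 2 ν) : ‖cut hα hβ T‖ ≤ ‖T‖ := by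
  refine ContinuousLinearMap.opNorm_le_bound _ (norm_nonneg _) fun f => ?_
  exact (norm_mulInd_le hβ _).trans ((T.le_opNorm _).trans
    (mul_le_mul_of_nonneg_left (norm_mulInd_le hα f) (norm_nonneg _)))

theorem mulInd_eq_zero_off {α : Set X} (hα : MeasurableSet α) (f : Lp ℂ 2 μ) :
    ∀ᵐ x ∂μ, x ∉ α → mulInd hα f x = 0 := by
  filter_upwards [mulInd_coe hα f] with x hx hxα
  simp [hx, hxα]

theorem supportedOn_cut {E : Set (X × Y)} {α : Set X} {β : Set Y} (hα : MeasurableSet α)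
    (hβ : MeasurableSet β) {T : Lp ℂ 2 μ →L[ℂ] Lp ℂ 2 ν} (hT : SupportedOn μ ν T E) :
    SupportedOn μ ν (cut hα hβ T) E := by
  intro α' β' hα' hβ' hnull f hf
  have hf' : ∀ᵐ x ∂μ, x ∉ α' → mulInd hα f x = 0 := by
    filter_upwards [mulInd_coe hα f, hf] with x h1 h2 hx
    by_cases hxα : x ∈ α <;> simp [h1, hxα, h2 hx]
  filter_upwards [hT α' β' hα' hβ' hnull _ hf', mulInd_coe hβ (T (mulInd hα f))] with y h1 h2 hy
  rw [cut_apply, h2]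
  by_cases hyβ : y ∈ β <;> simp [hyβ, h1 hy]

theorem supportedOn_mono {E E' : Set (X × Y)} (h : E ⊆ E') {T : Lp ℂ 2 μ →L[ℂ] Lp ℂ 2 ν}
    (hT : SupportedOn μ ν T E) : SupportedOn μ ν T E' := by
  rintro α β hα hβ ⟨X₀, Y₀, h1, h2, h3, h4, h5⟩
  exact hT α β hα hβ ⟨X₀, Y₀, h1, h2, h3, h4, (Set.inter_subset_inter_right _ h).trans h5⟩

theorem cut_eq_zero {E : Set (X × Y)} {α : Set X} {β : Set Y} (hα : MeasurableSet α)
    (hβ : MeasurableSet β) {T : Lp ℂ 2 μ →L[ℂ] Lp ℂ 2 ν} (hT : SupportedOn μ ν T E)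
    (h : (α ×ˢ β) ∩ E = ∅) : cut hα hβ T = 0 := by
  ext1 f
  have hz := hT α β hα hβ ⟨∅, ∅, .empty, .empty, measure_empty, measure_empty, by simp [h]⟩
    (mulInd hα f) (mulInd_eq_zero_off hα f)
  refine Lp.ext ?_
  rw [cut_apply, zero_apply]
  filter_upwards [hz, mulInd_coe hβ (T (mulInd hα f)), Lp.coeFn_zero ℂ 2 ν] with y h1 h2 h3
  rw [h2, h3]
  by_cases hyβ : y ∈ β <;> simp [hyβ, h1]

/-- The linear span of the blocks of `T` on measurable rectangles contained in `E`. -/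
noncomputable def cutSpan (T : Lp ℂ 2 μ →L[ℂ] Lp ℂ 2 ν) (E : Set (X × Y)) :
    Submodule ℂ (Lp ℂ 2 μ →L[ℂ] Lp ℂ 2 ν) :=
  Submodule.span ℂ {R | ∃ (α : Set X) (β : Set Y) (hα : MeasurableSet α) (hβ : MeasurableSet β),
    α ×ˢ β ⊆ E ∧ R = cut hα hβ T}

theorem cut_mem_cutSpan {E : Set (X × Y)} {α : Set X} {β : Set Y} (hα : MeasurableSet α)
    (hβ : MeasurableSet β) (T : Lp ℂ 2 μ →L[ℂ] Lp ℂ 2 ν) (h : α ×ˢ β ⊆ E) :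
    cut hα hβ T ∈ cutSpan T E :=
  Submodule.subset_span ⟨α, β, hα, hβ, h, rfl⟩

theorem self_mem_cutSpan_univ (T : Lp ℂ 2 μ →L[ℂ] Lp ℂ 2 ν) : T ∈ cutSpan T Set.univ := by
  have : cut MeasurableSet.univ MeasurableSet.univ T = T := by
    ext1 f
    rw [cut_apply, mulInd_univ, mulInd_univ]
  exact Submodule.subset_span ⟨_, _, .univ, .univ, Set.subset_univ _, this.symm⟩

/-- Approximation by blocks passes to intersections: approximate `T` by its blocks inside `E`, then
each of these by its own blocks inside `E'`. A block of a block is a block on the intersected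
rectangle. -/
theorem mem_closure_cutSpan_inter {E E' : Set (X × Y)} {T : Lp ℂ 2 μ →L[ℂ] Lp ℂ 2 ν}
    (hT : T ∈ (cutSpan T E).topologicalClosure)
    (h : ∀ (α : Set X) (β : Set Y) (hα : MeasurableSet α) (hβ : MeasurableSet β),
      cut hα hβ T ∈ (cutSpan (cut hα hβ T) E').topologicalClosure) :
    T ∈ (cutSpan T (E ∩ E')).topologicalClosure := by
  refine Submodule.topologicalClosure_minimal _ (Submodule.span_le.2 ?_)
    (Submodule.isClosed_topologicalClosure _) hT
  rintro _ ⟨α, β, hα, hβ, hE, rfl⟩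
  refine Submodule.topologicalClosure_mono (Submodule.span_le.2 ?_) (h α β hα hβ)
  rintro _ ⟨α', β', hα', hβ', hE', rfl⟩
  rw [cut_cut]
  exact cut_mem_cutSpan _ _ _ fun p hp =>
    ⟨hE ⟨hp.1.1, hp.2.2⟩, hE' ⟨hp.1.2, hp.2.1⟩⟩

/-- The norm of a block-diagonal sum is governed by its largest block, because the blocks have
pairwise orthogonal ranges and pairwise orthogonal initial spaces. -/
theorem norm_sum_cut_diag_le {p : X → ℕ} {q : Y → ℕ} (hp : Measurable p) (hq : Measurable q)
    {N : ℕ} (hN : ∀ x, p x < N) {B : Finset ℕ} (hB : B ⊆ Finset.range N)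
    (T : Lp ℂ 2 μ →L[ℂ] Lp ℂ 2 ν) {M : ℝ} (hM : 0 ≤ M)
    (hT : ∀ k ∈ B, ∀ f, ‖T (mulInd (hp (measurableSet_singleton k)) f)‖ ≤ M * ‖f‖) :
    ‖∑ k ∈ B, cut (hp (measurableSet_singleton k)) (hq (measurableSet_singleton k)) T‖ ≤ M := by
  refine ContinuousLinearMap.opNorm_le_bound _ hM fun f => ?_
  refine le_of_sq_le_sq ?_ (by positivity)
  have hdisj : ∀ i j : ℕ, i ≠ j → Disjoint ({i} : Set ℕ) {j} := fun i j h => by simpa using h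
  rw [sum_apply]
  simp only [cut_apply]
  rw [norm_sq_sum_of_orthogonal _ _ fun i j hij =>
    inner_mulInd_of_disjoint _ _ ((hdisj i j hij).preimage q) _ _]
  calc ∑ k ∈ B, ‖mulInd (hq (measurableSet_singleton k))
          (T (mulInd (hp (measurableSet_singleton k)) f))‖ ^ 2
      ≤ ∑ k ∈ B, M ^ 2 * ‖mulInd (hp (measurableSet_singleton k)) f‖ ^ 2 := by
        refine Finset.sum_le_sum fun k hk => ?_
        rw [← mul_pow]
        refine pow_le_pow_left₀ (norm_nonneg _) ((norm_mulInd_le _ _).trans ?_) 2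
        have := hT k hk (mulInd (hp (measurableSet_singleton k)) f)
        rw [mulInd_mulInd] at this
        simpa only [Set.inter_self] using this
    _ ≤ ∑ k ∈ Finset.range N, M ^ 2 * ‖mulInd (hp (measurableSet_singleton k)) f‖ ^ 2 :=
        Finset.sum_le_sum_of_subset_of_nonneg hB fun _ _ _ => by positivity
    _ = (M * ‖f‖) ^ 2 := by
        rw [← Finset.mul_sum, ← norm_sq_sum_of_orthogonal _ _ fun i j hij =>
          inner_mulInd_of_disjoint _ _ ((hdisj i j hij).preimage p) _ _,
          sum_mulInd_fiber hp hN, mul_pow]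

theorem sum_sum_cut {p : X → ℕ} {q : Y → ℕ} (hp : Measurable p) (hq : Measurable q)
    {N : ℕ} (hpN : ∀ x, p x < N) (hqN : ∀ y, q y < N) (T : Lp ℂ 2 μ →L[ℂ] Lp ℂ 2 ν) :
    ∑ k ∈ Finset.range N, ∑ l ∈ Finset.range N,
      cut (hp (measurableSet_singleton k)) (hq (measurableSet_singleton l)) T = T := by
  ext1 f
  simp only [sum_apply, cut_apply]
  simp_rw [sum_mulInd_fiber hq hqN]
  rw [← map_sum, sum_mulInd_fiber hp hpN]

/-- A compact operator is uniformly small on functions living over a single gap of a suitable finite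
partition of the line. -/
theorem exists_finset_norm_comp_mulInd_le {T : Lp ℂ 2 μ →L[ℂ] Lp ℂ 2 ν}
    (hT : IsCompactOperator ⇑T) {f : X → ℝ} (hf : Measurable f) {ε : ℝ} (hε : 0 < ε) :
    ∃ S : Finset ℝ, ∀ (J : Set ℝ) (hJ : J.OrdConnected), (∀ s ∈ S, s ∉ J) →
      ∀ h, ‖T (mulInd (hf hJ.measurableSet) h)‖ ≤ ε * ‖h‖ := by
  classical
  obtain ⟨n, e, w, hF⟩ := exists_finiteRank_approx T hT (half_pos hε)
  set F := ∑ j, rankOne ℂ (e j) (w j) with hFdef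
  -- The summand `1` only keeps `C` positive.
  let C : ℝ := ∑ j, ‖e j‖ + 1
  have hC : 0 < C := by positivity
  choose S hS using fun j => exists_finset_norm_mulInd_le hf (w j) (div_pos (half_pos hε) hC)
  refine ⟨Finset.univ.biUnion S, fun J hJ hJS h => ?_⟩
  set Q : Lp ℂ 2 μ →L[ℂ] Lp ℂ 2 μ := mulInd (hf hJ.measurableSet) with hQ
  have hw : ∀ j, ‖Q (w j)‖ ≤ ε / 2 / C := fun j =>
    hS j J hJ fun s hs => hJS s (Finset.mem_biUnion.2 ⟨j, Finset.mem_univ _, hs⟩)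
  have h1 : ‖(T - F) (Q h)‖ ≤ ε / 2 * ‖h‖ :=
    ((T - F).le_opNorm _).trans (mul_le_mul hF (norm_mulInd_le _ _) (norm_nonneg _) (by positivity))
  have h2 : ‖F (Q h)‖ ≤ ε / 2 * ‖h‖ := by
    have hFQ : F (Q h) = ∑ j, inner ℂ (Q (w j)) h • e j := by
      rw [hFdef, sum_apply]
      simp only [rankOne_apply, hQ, inner_mulInd]
    rw [hFQ]
    calc ‖∑ j, inner ℂ (Q (w j)) h • e j‖ ≤ ∑ j, ε / 2 / C * ‖h‖ * ‖e j‖ := by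
          refine norm_sum_le_of_le _ fun j _ => ?_
          rw [norm_smul]
          refine mul_le_mul_of_nonneg_right ?_ (norm_nonneg _)
          exact (norm_inner_le_norm _ _).trans
            (mul_le_mul_of_nonneg_right (hw j) (norm_nonneg _))
      _ = ε / 2 * ‖h‖ * ((∑ j, ‖e j‖) / C) := by rw [← Finset.mul_sum]; ring
      _ ≤ ε / 2 * ‖h‖ * 1 := by
          refine mul_le_mul_of_nonneg_left ?_ (by positivity)
          rw [div_le_one hC]; simp [C]
      _ = ε / 2 * ‖h‖ := mul_one _
  calc ‖T (Q h)‖ = ‖(T - F) (Q h) + F (Q h)‖ := by simp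
    _ ≤ ε / 2 * ‖h‖ + ε / 2 * ‖h‖ := norm_add_le_of_le h1 h2
    _ = ε * ‖h‖ := by ring

/-- The case of one inequality `f x ≤ g y`. In the decomposition of `T` given by the cells of `S`,
blocks below the diagonal vanish, blocks above it and blocks at the points of `S` lie on rectangles
inside the set, and the diagonal blocks over the gaps add up to an operator of small norm. -/
theorem mem_closure_cutSpan_le {f : X → ℝ} {g : Y → ℝ} (hf : Measurable f) (hg : Measurable g)
    {T : Lp ℂ 2 μ →L[ℂ] Lp ℂ 2 ν} (hT : IsCompactOperator ⇑T)
    (hTs : SupportedOn μ ν T {p | f p.1 ≤ g p.2}) :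
    T ∈ (cutSpan T {p : X × Y | f p.1 ≤ g p.2}).topologicalClosure := by
  classical
  rw [← SetLike.mem_coe, Submodule.topologicalClosure_coe, Metric.mem_closure_iff]
  intro ε hε
  obtain ⟨S, hS⟩ := exists_finset_norm_comp_mulInd_le hT hf (half_pos hε)
  have hc : Measurable (cellIndex S) := (cellIndex_mono S).measurable
  have hp : Measurable fun x => cellIndex S (f x) := hc.comp hf
  have hq : Measurable fun y => cellIndex S (g y) := hc.comp hg
  let N := 2 * S.card + 1
  let D : ℕ → ℕ → (Lp ℂ 2 μ →L[ℂ] Lp ℂ 2 ν) := fun k l =>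
    cut (hp (measurableSet_singleton k)) (hq (measurableSet_singleton l)) T
  -- The cells that are gaps.
  let B : Finset ℕ := (Finset.range N).filter fun k => ∀ s ∈ S, cellIndex S s ≠ k
  have hsum : ∑ k ∈ Finset.range N, ∑ l ∈ Finset.range N, D k l = T :=
    sum_sum_cut hp hq (fun x => cellIndex_lt S _) (fun y => cellIndex_lt S _) T
  have hoff : ∀ k l, k ≠ l → D k l ∈ cutSpan T {p : X × Y | f p.1 ≤ g p.2} := by
    intro k l hkl
    rcases hkl.lt_or_gt with hlt | hlt
    · refine cut_mem_cutSpan _ _ _ ?_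
      rintro ⟨x, y⟩ ⟨hx, hy⟩
      simp only [Set.mem_preimage, Set.mem_singleton_iff] at hx hy
      rw [← hx, ← hy] at hlt
      exact ((cellIndex_mono S).reflect_lt hlt).le
    · have : D k l = 0 := by
        refine cut_eq_zero _ _ hTs (Set.eq_empty_iff_forall_notMem.2 ?_)
        rintro ⟨x, y⟩ ⟨⟨hx, hy⟩, hxy⟩
        simp only [Set.mem_preimage, Set.mem_singleton_iff] at hx hy
        rw [← hx, ← hy] at hlt
        exact hlt.not_ge (cellIndex_mono S hxy)
      rw [this]; exact zero_mem _
  have hdiag : ∀ k ∈ Finset.range N, k ∉ B → D k k ∈ cutSpan T {p : X × Y | f p.1 ≤ g p.2} := by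
    intro k hk hkB
    have : ∃ s ∈ S, cellIndex S s = k := by
      by_contra! h
      exact hkB (Finset.mem_filter.2 ⟨hk, h⟩)
    obtain ⟨s, hs, rfl⟩ := this
    -- The cell of a point of `S` is a singleton, so `f = g` on the corresponding rectangle.
    have huniq : ∀ t, cellIndex S t = cellIndex S s → t = s := by
      intro t ht
      rcases lt_trichotomy t s with h | h | h
      · exact absurd ht (cellIndex_lt_of_lt h (Or.inr hs)).ne
      · exact h
      · exact absurd ht (cellIndex_lt_of_lt h (Or.inl hs)).ne'
    refine cut_mem_cutSpan _ _ _ ?_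
    rintro ⟨x, y⟩ ⟨hx, hy⟩
    exact ((huniq _ hx).trans (huniq _ hy).symm).le
  have hB : B ⊆ Finset.range N := Finset.filter_subset _ _
  have hsmall : ‖∑ k ∈ B, D k k‖ ≤ ε / 2 := by
    refine norm_sum_cut_diag_le hp hq (fun x => cellIndex_lt S _) hB T (by positivity)
      fun k hk h => ?_
    have hJ : (cellIndex S ⁻¹' {k}).OrdConnected :=
      Set.ordConnected_singleton.preimage_mono (cellIndex_mono S)
    exact hS _ hJ (fun s hs => (Finset.mem_filter.1 hk).2 s hs) h
  refine ⟨T - ∑ k ∈ B, D k k, ?_, ?_⟩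
  · have hsplit : T - ∑ k ∈ B, D k k = ∑ k ∈ Finset.range N \ B, D k k
        + ∑ k ∈ Finset.range N, ∑ l ∈ (Finset.range N).erase k, D k l := by
      rw [sub_eq_iff_eq_add, add_right_comm, Finset.sum_sdiff hB, ← Finset.sum_add_distrib]
      conv_lhs => rw [← hsum]
      exact Finset.sum_congr rfl fun k hk =>
        (Finset.add_sum_erase (Finset.range N) (fun l => D k l) hk).symm
    rw [hsplit]
    refine add_mem (sum_mem fun k hk => ?_) (sum_mem fun k _ => sum_mem fun l hl => ?_)
    · exact hdiag k (Finset.mem_sdiff.1 hk).1 (Finset.mem_sdiff.1 hk).2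
    · exact hoff k l (Finset.ne_of_mem_erase hl).symm
  · rw [dist_eq_norm, sub_sub_cancel]
    linarith

/-- A compact operator supported on a set of finite width is a norm limit of sums of its blocks on
rectangles contained in that set. -/
theorem mem_closure_cutSpan_of_finiteWidth {n : ℕ} {f : Fin n → X → ℝ} {g : Fin n → Y → ℝ}
    (hf : ∀ i, Measurable (f i)) (hg : ∀ i, Measurable (g i))
    {T : Lp ℂ 2 μ →L[ℂ] Lp ℂ 2 ν} (hT : IsCompactOperator ⇑T)
    (hTs : SupportedOn μ ν T {p | ∀ i, f i p.1 ≤ g i p.2}) :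
    T ∈ (cutSpan T {p : X × Y | ∀ i, f i p.1 ≤ g i p.2}).topologicalClosure := by
  classical
  have key : ∀ s : Finset (Fin n),
      T ∈ (cutSpan T {p : X × Y | ∀ i ∈ s, f i p.1 ≤ g i p.2}).topologicalClosure := by
    intro s
    induction s using Finset.induction_on with
    | empty =>
      simpa using Submodule.le_topologicalClosure _ (self_mem_cutSpan_univ T)
    | insert a s ha ih =>
      have heq : {p : X × Y | ∀ i ∈ insert a s, f i p.1 ≤ g i p.2}
          = {p | ∀ i ∈ s, f i p.1 ≤ g i p.2} ∩ {p | f a p.1 ≤ g a p.2} := by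
        ext p
        simp [and_comm]
      rw [heq]
      exact mem_closure_cutSpan_inter ih fun α β hα hβ =>
        mem_closure_cutSpan_le (hf a) (hg a) (isCompactOperator_cut hα hβ hT)
          (supportedOn_cut hα hβ (supportedOn_mono (Set.ofPred_subset_ofPred.2 fun _ hp => hp a) hTs))
  simpa using key Finset.univ

/-- Since `α × β ⊆ E`, if `(α' × β') ∩ E` is marginally null then so is `(α ∩ α') × (β ∩ β')`, which
for a rectangle means that one of its sides is null. -/
theorem supportedOn_cut_rankOne {E : Set (X × Y)} {α : Set X} {β : Set Y} (hα : MeasurableSet α)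
    (hβ : MeasurableSet β) (hE : α ×ˢ β ⊆ E) (v : Lp ℂ 2 ν) (w : Lp ℂ 2 μ) :
    SupportedOn μ ν (cut hα hβ (rankOne ℂ v w)) E := by
  rintro α' β' hα' hβ' ⟨X₀, Y₀, -, -, hX₀, hY₀, hsub⟩ f hf
  have hX₀' : ∀ᵐ x ∂μ, x ∉ X₀ := measure_eq_zero_iff_ae_notMem.1 hX₀
  have hY₀' : ∀ᵐ y ∂ν, y ∉ Y₀ := measure_eq_zero_iff_ae_notMem.1 hY₀
  by_cases h : α ∩ α' ⊆ X₀
  · have : mulInd hα f = 0 := by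
      refine Lp.ext ?_
      filter_upwards [mulInd_coe hα f, hf, hX₀', Lp.coeFn_zero ℂ 2 μ] with x h1 h2 h3 h4
      rw [h1, h4]
      by_cases hxα : x ∈ α
      · simpa [hxα] using h2 fun hx' => h3 (h ⟨hxα, hx'⟩)
      · simp [hxα]
    rw [cut_apply, this, map_zero, map_zero]
    filter_upwards [Lp.coeFn_zero ℂ 2 ν] with y hy _
    exact hy
  · obtain ⟨x, hx, hxX⟩ := Set.not_subset.1 h
    rw [cut_apply]
    filter_upwards [mulInd_coe hβ (rankOne ℂ v w (mulInd hα f)), hY₀'] with y h1 h2 hy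
    rw [h1]
    refine Set.indicator_of_notMem (fun hyβ => ?_) _
    have := hsub (a := (x, y)) ⟨⟨hx.2, hy⟩, hE ⟨hx.1, hyβ⟩⟩
    simp [hxX, h2] at this

/-- A block of `f ↦ ⟪w, f⟫ • v` has rank one in the bilinear form `f ↦ (∫ f u) • v`, where `u` is the
complex conjugate of the restriction of `w`. -/
theorem cut_rankOne_apply {α : Set X} {β : Set Y} (hα : MeasurableSet α)
    (hβ : MeasurableSet β) (v : Lp ℂ 2 ν) (w f : Lp ℂ 2 μ) :
    cut hα hβ (rankOne ℂ v w) f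
      = (∫ x, f x * (star (mulInd hα w) : Lp ℂ 2 μ) x ∂μ) • mulInd hβ v := by
  rw [cut_apply, rankOne_apply, map_smul, ← inner_mulInd, L2.inner_def]
  congr 1
  refine integral_congr_ae ?_
  filter_upwards [Lp.coeFn_star (mulInd hα w)] with x hx
  rw [hx]
  simp

end Cut

/-! ### The theorem -/

/-- Every compact operator supported on a set of finite width lies in
the operator-norm closed linear span of the rank one operators supported on that set. -/
theorem stmt_3
    {X Y : Type*} [MeasurableSpace X] [StandardBorelSpace X]
    [MeasurableSpace Y] [StandardBorelSpace Y]
    (μ : Measure X) (ν : Measure Y) [SigmaFinite μ] [SigmaFinite ν]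
    (E : Set (X × Y)) (hE : FiniteWidth E)
    (T : Lp ℂ 2 μ →L[ℂ] Lp ℂ 2 ν) (hTcomp : IsCompactOperator ⇑T)
    (hTsupp : SupportedOn μ ν T E) :
    T ∈ closure ((Submodule.span ℂ
      {R : Lp ℂ 2 μ →L[ℂ] Lp ℂ 2 ν |
        (∃ (u : Lp ℂ 2 μ) (v : Lp ℂ 2 ν),
          ∀ f : Lp ℂ 2 μ, R f = (∫ x, f x * u x ∂μ) • v) ∧
        SupportedOn μ ν R E} : Submodule ℂ (Lp ℂ 2 μ →L[ℂ] Lp ℂ 2 ν)) :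
      Set (Lp ℂ 2 μ →L[ℂ] Lp ℂ 2 ν)) := by
  obtain ⟨n, f, g, hf, hg, rfl⟩ := hE
  have hmem := mem_closure_cutSpan_of_finiteWidth hf hg hTcomp hTsupp
  rw [← Submodule.topologicalClosure_coe, SetLike.mem_coe]
  refine Submodule.topologicalClosure_minimal _ (Submodule.span_le.2 ?_)
    (Submodule.isClosed_topologicalClosure _) hmem
  rintro _ ⟨α, β, hα, hβ, hαβ, rfl⟩
  rw [Submodule.topologicalClosure_coe, Metric.mem_closure_iff]
  intro ε hε
  obtain ⟨m, e, w, hF⟩ := exists_finiteRank_approx T hTcomp (half_pos hε)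
  refine ⟨∑ j, cut hα hβ (InnerProductSpace.rankOne ℂ (e j) (w j)), ?_, ?_⟩
  · refine sum_mem fun j _ => Submodule.subset_span ⟨⟨star (mulInd hα (w j)), mulInd hβ (e j),
      fun h => cut_rankOne_apply hα hβ _ _ h⟩, supportedOn_cut_rankOne hα hβ hαβ _ _⟩
  · have heq : cut hα hβ T - ∑ j, cut hα hβ (InnerProductSpace.rankOne ℂ (e j) (w j))
        = cut hα hβ (T - ∑ j, InnerProductSpace.rankOne ℂ (e j) (w j)) := by
      ext1 h
      simp only [sub_apply, sum_apply, cut_apply, map_sub,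
        map_sum]
    rw [dist_eq_norm, heq]
    linarith [norm_cut_le hα hβ (T - ∑ j, InnerProductSpace.rankOne ℂ (e j) (w j))]
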